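/- Let b ≥ 3 and let Λ ⊆ ℝ^b be a countable additive subgroup. Then any two points [x], [y] of the period domain D are strongly equivalent: there exist k ≥ 1, generic positive three-dimensional subspaces W₁, …, W_k ⊆ ℝ^b, and points [x] = [x₁], [x₂], …, [x_{k+1}] = [y] in D such that [x_i], [x_{i+1}] ∈ T_{W_i} for each i = 1, …, k. -/

import Mathlib

noncomputable section

open scoped BigOperators

def eps {b : ℕ} (i : Fin b) : ℝ := if (i : ℕ) < 3 then 1 else -1

def bR {b : ℕ} (v w : Fin b → ℝ) : ℝ := ∑ i, eps i * v i * w i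

def qR {b : ℕ} (v : Fin b → ℝ) : ℝ := bR v v

def bC {b : ℕ} (z w : Fin b → ℂ) : ℂ := ∑ i, (eps i : ℂ) * z i * w i

def qC {b : ℕ} (z : Fin b → ℂ) : ℂ := bC z z

def conjVec {b : ℕ} (z : Fin b → ℂ) : Fin b → ℂ := fun i => (starRingEnd ℂ) (z i)

def rePart {b : ℕ} (z : Fin b → ℂ) : Fin b → ℝ := fun i => (z i).re
def imPart {b : ℕ} (z : Fin b → ℂ) : Fin b → ℝ := fun i => (z i).im

def cplx {b : ℕ} (v : Fin b → ℝ) : Fin b → ℂ := fun i => (v i : ℂ)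

def isPeriodVec {b : ℕ} (z : Fin b → ℂ) : Prop :=
  qC z = 0 ∧ 0 < (bC z (conjVec z)).re

instance projectivizationTopology (K V : Type*) [DivisionRing K] [AddCommGroup V] [Module K V]
    [TopologicalSpace V] : TopologicalSpace (Projectivization K V) :=
  inferInstanceAs (TopologicalSpace (Quotient (projectivizationSetoid K V)))

def periodDomain (b : ℕ) : Set (Projectivization ℂ (Fin b → ℂ)) :=
  {x | ∃ (z : Fin b → ℂ) (hz : z ≠ 0), Projectivization.mk ℂ z hz = x ∧ isPeriodVec z}

def Pspan {b : ℕ} (z : Fin b → ℂ) : Submodule ℝ (Fin b → ℝ) :=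
  Submodule.span ℝ {rePart z, imPart z}

def PosDefOn {b : ℕ} (W : Submodule ℝ (Fin b → ℝ)) : Prop :=
  ∀ v ∈ W, v ≠ 0 → 0 < qR v

def twistorLine {b : ℕ} (W : Submodule ℝ (Fin b → ℝ)) :
    Set (Projectivization ℂ (Fin b → ℂ)) :=
  {x | ∃ (z : Fin b → ℂ) (hz : z ≠ 0), Projectivization.mk ℂ z hz = x ∧ isPeriodVec z ∧
    rePart z ∈ W ∧ imPart z ∈ W}

/-- `W^⊥ ∩ Λ = {0}`: the twistor line / three-space `W` is generic w.r.t. `Λ`. -/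
def IsGenericW {b : ℕ} (Λ : AddSubgroup (Fin b → ℝ)) (W : Submodule ℝ (Fin b → ℝ)) : Prop :=
  ∀ α ∈ Λ, (∀ w ∈ W, bR α w = 0) → α = 0

def bRlin {b : ℕ} (p : Fin b → ℝ) : (Fin b → ℝ) →ₗ[ℝ] ℝ where
  toFun v := bR v p
  map_add' x y := by
    unfold bR
    rw [← Finset.sum_add_distrib]
    exact Finset.sum_congr rfl fun i _ => by simp [Pi.add_apply]; ring
  map_smul' c x := by
    show bR (c • x) p = (RingHom.id ℝ) c • bR x p
    unfold bR
    rw [RingHom.id_apply, smul_eq_mul, Finset.mul_sum]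
    exact Finset.sum_congr rfl fun i _ => by simp [Pi.smul_apply]; ring

def perpSubmodule {b : ℕ} (P : Submodule ℝ (Fin b → ℝ)) : Submodule ℝ (Fin b → ℝ) :=
  ⨅ p ∈ P, LinearMap.ker (bRlin p)

open MeasureTheory in
theorem dense_generic {b : ℕ} (Λ : AddSubgroup (Fin b → ℝ))
    (hΛ : (Λ : Set (Fin b → ℝ)).Countable) :
    Dense {c : Fin b → ℝ | ∀ α ∈ Λ, bR α c = 0 → α = 0} := by
  refine Measure.dense_of_ae (μ := (volume : Measure (Fin b → ℝ))) ?_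
  have h : ∀ α ∈ (Λ : Set (Fin b → ℝ)), ∀ᵐ c : Fin b → ℝ, bR α c = 0 → α = 0 := by
    intro α _
    by_cases h0 : α = 0
    · simp [h0]
    have hne : LinearMap.ker (bRlin α) ≠ ⊤ := by
      intro ht
      apply h0
      funext i
      have h1 : (Pi.single i 1 : Fin b → ℝ) ∈ LinearMap.ker (bRlin α) := by
        rw [ht]; trivial
      have h2 : bR (Pi.single i 1) α = 0 := h1
      unfold bR at h2
      rw [Finset.sum_eq_single i] at h2
      · have : eps i ≠ 0 := by unfold eps; split_ifs <;> norm_num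
        simpa [this] using h2
      · intro j _ hj
        simp [Pi.single_eq_of_ne hj]
      · simp
    have hn := Measure.addHaar_submodule (volume : Measure (Fin b → ℝ)) _ hne
    have := measure_eq_zero_iff_ae_notMem.mp hn
    filter_upwards [this] with c hc h3
    exfalso
    apply hc
    show bR c α = 0
    rw [← h3]
    unfold bR
    exact Finset.sum_congr rfl fun i _ => by ring
  have := (ae_ball_iff hΛ).mpr h
  filter_upwards [this] with c hc α hα using hc α hα

theorem bR_comm {b : ℕ} (v w : Fin b → ℝ) : bR v w = bR w v := by
  unfold bR
  exact Finset.sum_congr rfl fun i _ => by ring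

theorem bR_add_left {b : ℕ} (v w p : Fin b → ℝ) : bR (v + w) p = bR v p + bR w p :=
  (bRlin p).map_add v w

theorem bR_smul_left {b : ℕ} (r : ℝ) (v p : Fin b → ℝ) : bR (r • v) p = r * bR v p :=
  (bRlin p).map_smul r v

theorem bR_add_right {b : ℕ} (v w p : Fin b → ℝ) : bR p (v + w) = bR p v + bR p w := by
  rw [bR_comm, bR_add_left, bR_comm v, bR_comm w]

theorem bR_smul_right {b : ℕ} (r : ℝ) (v p : Fin b → ℝ) : bR p (r • v) = r * bR p v := by
  rw [bR_comm, bR_smul_left, bR_comm v]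

theorem bR_cont {b : ℕ} (p : Fin b → ℝ) : Continuous fun c => bR c p := by
  unfold bR; fun_prop

theorem qR_cont {b : ℕ} : Continuous fun c : Fin b → ℝ => bR c c := by
  unfold bR; fun_prop

def Good {b : ℕ} (Λ : AddSubgroup (Fin b → ℝ)) (W : Submodule ℝ (Fin b → ℝ)) : Prop :=
  Module.finrank ℝ ↥W = 3 ∧ PosDefOn W ∧ IsGenericW Λ W

def Near {b : ℕ} (a d c : Fin b → ℝ) : Prop :=
  0 < bR c c - bR c a ^ 2 / bR a a - bR c d ^ 2 / bR d d

theorem near_open {b : ℕ} (a d : Fin b → ℝ) : IsOpen {c | Near a d c} := by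
  unfold Near
  refine isOpen_lt continuous_const ?_
  exact (qR_cont.sub (((bR_cont a).pow 2).div_const _)).sub (((bR_cont d).pow 2).div_const _)

theorem near_self {b : ℕ} {a d f : Fin b → ℝ} (hf : 0 < bR f f) (h1 : bR f a = 0)
    (h2 : bR f d = 0) : Near a d f := by
  unfold Near; rw [h1, h2]; simpa using hf

theorem near_pos {b : ℕ} {a d c : Fin b → ℝ} (ha : 0 < bR a a) (hd : 0 < bR d d)
    (had : bR a d = 0) (hc : Near a d c) (s t r : ℝ) (h : ¬ (s = 0 ∧ t = 0 ∧ r = 0)) :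
    0 < qR (s • a + t • d + r • c) := by
  have e : qR (s • a + t • d + r • c) = bR a a * (s + r * (bR c a / bR a a)) ^ 2
      + bR d d * (t + r * (bR c d / bR d d)) ^ 2
      + r ^ 2 * (bR c c - bR c a ^ 2 / bR a a - bR c d ^ 2 / bR d d) := by
    unfold qR
    simp only [bR_add_left, bR_add_right, bR_smul_left, bR_smul_right]
    rw [bR_comm a c, bR_comm d c, bR_comm d a, had]
    field_simp
    ring
  rw [e]
  unfold Near at hc
  by_cases hr : r = 0
  · subst hr
    simp only [zero_mul, add_zero, ne_eq, OfNat.ofNat_ne_zero, not_false_eq_true, zero_pow]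
    by_cases hs : s = 0
    · have ht : t ≠ 0 := fun ht => h ⟨hs, ht, rfl⟩
      positivity
    · positivity
  · have := mul_pos (by positivity : 0 < r ^ 2) hc
    have h1 : 0 ≤ bR a a * (s + r * (bR c a / bR a a)) ^ 2 := by positivity
    have h2 : 0 ≤ bR d d * (t + r * (bR c d / bR d d)) ^ 2 := by positivity
    linarith

theorem qR_zero {b : ℕ} : qR (0 : Fin b → ℝ) = 0 := by simp [qR, bR]

theorem near_good {b : ℕ} {Λ : AddSubgroup (Fin b → ℝ)} {a d c : Fin b → ℝ}
    (ha : 0 < bR a a) (hd : 0 < bR d d)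
    (had : bR a d = 0) (hc : Near a d c) (hg : ∀ α ∈ Λ, bR α c = 0 → α = 0) :
    Good Λ (Submodule.span ℝ {a, d, c}) := by
  refine ⟨?_, ?_, ?_⟩
  · have hli : LinearIndependent ℝ ![a, d, c] := by
      rw [Fintype.linearIndependent_iff]
      intro g hg0
      simp only [Fin.sum_univ_three, Matrix.cons_val] at hg0
      by_contra hcon
      have := near_pos ha hd had hc (g 0) (g 1) (g 2) (by
        rintro ⟨h0, h1, h2⟩
        apply hcon
        intro i
        fin_cases i <;> assumption)
      rw [hg0, qR_zero] at this
      exact lt_irrefl _ this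
    have := finrank_span_eq_card hli
    have hr : Set.range ![a, d, c] = {a, d, c} := by
      ext w
      simp only [Set.mem_range, Fin.exists_fin_succ, Set.mem_insert_iff, Set.mem_singleton_iff]
      simp [eq_comm]
    rw [hr] at this
    simpa using this
  · intro v hv hv0
    rw [Submodule.mem_span_triple] at hv
    obtain ⟨s, t, r, rfl⟩ := hv
    apply near_pos ha hd had hc
    rintro ⟨rfl, rfl, rfl⟩
    simp at hv0
  · intro α hα h
    exact hg α hα (h c (Submodule.subset_span (by simp)))

theorem period_iff {b : ℕ} (z : Fin b → ℂ) : isPeriodVec z ↔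
    bR (rePart z) (rePart z) = bR (imPart z) (imPart z) ∧ bR (rePart z) (imPart z) = 0 ∧
    0 < bR (rePart z) (rePart z) := by
  have h1 : (qC z).re = bR (rePart z) (rePart z) - bR (imPart z) (imPart z) := by
    simp only [qC, bC, bR, rePart, imPart, Complex.re_sum, ← Finset.sum_sub_distrib]
    refine Finset.sum_congr rfl fun i _ => ?_
    simp
  have h2 : (qC z).im = 2 * bR (rePart z) (imPart z) := by
    simp only [qC, bC, bR, rePart, imPart, Complex.im_sum, Finset.mul_sum]
    refine Finset.sum_congr rfl fun i _ => ?_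
    simp
    ring
  have h3 : (bC z (conjVec z)).re = bR (rePart z) (rePart z) + bR (imPart z) (imPart z) := by
    simp only [bC, bR, rePart, imPart, conjVec, Complex.re_sum, ← Finset.sum_add_distrib]
    refine Finset.sum_congr rfl fun i _ => ?_
    simp
  unfold isPeriodVec
  rw [Complex.ext_iff, h1, h2, h3]
  simp only [Complex.zero_re, Complex.zero_im]
  constructor
  · rintro ⟨⟨p, q⟩, r⟩
    refine ⟨by linarith, by linarith, by linarith⟩
  · rintro ⟨p, q, r⟩
    refine ⟨⟨by linarith, by linarith⟩, by linarith⟩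

/-- two vectors of positive norm square and positive Gram determinant give a period point. -/
theorem exists_point {b : ℕ} {a c : Fin b → ℝ} (ha : 0 < bR a a)
    (hc : 0 < bR c c - bR c a ^ 2 / bR a a) :
    ∃ p : Projectivization ℂ (Fin b → ℂ), ∀ W : Submodule ℝ (Fin b → ℝ), a ∈ W → c ∈ W →
      p ∈ twistorLine W := by
  set m := bR c a / bR a a with hm
  set δ := bR c c - bR c a ^ 2 / bR a a with hδ
  set s := Real.sqrt (δ / bR a a) with hs
  have hs2 : s ^ 2 = δ / bR a a := Real.sq_sqrt (by positivity)
  let z : Fin b → ℂ := fun i => ⟨s * a i, c i + (-m) * a i⟩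
  have hre : rePart z = s • a := by funext i; simp [rePart, z]
  have him : imPart z = c + (-m) • a := by funext i; simp [imPart, z]
  have h1 : bR (s • a) (s • a) = δ := by
    simp only [bR_smul_left, bR_smul_right]
    have : s * (s * bR a a) = s ^ 2 * bR a a := by ring
    rw [this, hs2]; field_simp
  have h2 : bR (c + (-m) • a) (c + (-m) • a) = δ := by
    simp only [bR_add_left, bR_add_right, bR_smul_left, bR_smul_right]
    rw [bR_comm a c, hδ, hm]; field_simp; ring
  have h3 : bR (s • a) (c + (-m) • a) = 0 := by
    simp only [bR_add_right, bR_smul_left, bR_smul_right]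
    rw [bR_comm a c, hm]; field_simp; ring
  have hp : isPeriodVec z := by
    rw [period_iff, hre, him]
    exact ⟨by rw [h1, h2], h3, by rw [h1]; exact hc⟩
  have hz : z ≠ 0 := by
    intro h0
    have := hp.2
    rw [h0] at this
    simp [bC] at this
  refine ⟨Projectivization.mk ℂ z hz, fun W haW hcW => ⟨z, hz, rfl, hp, ?_, ?_⟩⟩
  · rw [hre]; exact W.smul_mem _ haW
  · rw [him]; exact W.add_mem hcW (W.smul_mem _ haW)

theorem exists_orth {b : ℕ} {V : Submodule ℝ (Fin b → ℝ)} (hV : Module.finrank ℝ V = 3)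
    (hpos : PosDefOn V) (p q : Fin b → ℝ) :
    ∃ f ∈ V, 0 < bR f f ∧ bR f p = 0 ∧ bR f q = 0 := by
  let L : V →ₗ[ℝ] ℝ × ℝ := ((bRlin p).prod (bRlin q)).comp V.subtype
  have hk : LinearMap.ker L ≠ ⊥ := LinearMap.ker_ne_bot_of_finrank_lt (by simp [hV])
  obtain ⟨f, hf, hf0⟩ := Submodule.exists_mem_ne_zero_of_ne_bot hk
  have h : (bR f.1 p, bR f.1 q) = ((0, 0) : ℝ × ℝ) := hf
  rw [Prod.mk.injEq] at h
  exact ⟨f, f.2, hpos f f.2 (by simpa using hf0), h.1, h.2⟩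

theorem exists_chain {b : ℕ} {Λ : AddSubgroup (Fin b → ℝ)}
    (hΛ : (Λ : Set (Fin b → ℝ)).Countable) {V : Submodule ℝ (Fin b → ℝ)} (hV : Good Λ V)
    {x : Projectivization ℂ (Fin b → ℂ)} (hx : x ∈ periodDomain b) :
    ∃ (W₁ W₂ W₃ : Submodule ℝ (Fin b → ℝ)) (p₁ p₂ p₃ : Projectivization ℂ (Fin b → ℂ)),
      Good Λ W₁ ∧ Good Λ W₂ ∧ Good Λ W₃ ∧ x ∈ twistorLine W₁ ∧ p₁ ∈ twistorLine W₁ ∧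
      p₁ ∈ twistorLine W₂ ∧ p₂ ∈ twistorLine W₂ ∧ p₂ ∈ twistorLine W₃ ∧ p₃ ∈ twistorLine W₃ ∧
      p₃ ∈ twistorLine V := by
  obtain ⟨z, hz, rfl, hp⟩ := hx
  obtain ⟨huv, h0, hu⟩ := (period_iff z).mp hp
  have hv := hu
  rw [huv] at hv
  set u := rePart z with hu_def
  set v := imPart z with hv_def
  obtain ⟨f, hfV, hf, hfu, hfv⟩ := exists_orth hV.1 hV.2.1 u v
  obtain ⟨g, hgV, hg, hgf, hgu⟩ := exists_orth hV.1 hV.2.1 f u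
  obtain ⟨k, hkV, hk, hkf, hkg⟩ := exists_orth hV.1 hV.2.1 f g
  have hfg : bR f g = 0 := by rw [bR_comm]; exact hgf
  have hug : bR u g = 0 := by rw [bR_comm]; exact hgu
  have hgk : bR g k = 0 := by rw [bR_comm]; exact hkg
  have hfk : bR f k = 0 := by rw [bR_comm]; exact hkf
  have hopen : IsOpen ({c | Near u v c} ∩ {c | Near u g c} ∩ {c | Near g k c}) :=
    ((near_open u v).inter (near_open u g)).inter (near_open g k)
  obtain ⟨c, ⟨⟨hc1, hc2⟩, hc3⟩, hcg⟩ := (dense_generic Λ hΛ).inter_open_nonempty _ hopen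
    ⟨f, ⟨near_self hf hfu hfv, near_self hf hfu hfg⟩, near_self hf hfg hfk⟩
  have hc2' : Near u g c := hc2
  unfold Near at hc2'
  have e1 : 0 ≤ bR c u ^ 2 / bR u u := by positivity
  have e2 : 0 ≤ bR c g ^ 2 / bR g g := by positivity
  obtain ⟨p₁, hp₁⟩ := exists_point (a := u) (c := c) hu (by linarith)
  obtain ⟨p₂, hp₂⟩ := exists_point (a := g) (c := c) hg (by linarith)
  obtain ⟨p₃, hp₃⟩ := exists_point (a := g) (c := k) hg (by rw [hkg]; simpa using hk)
  have m : ∀ {S : Set (Fin b → ℝ)} {w : Fin b → ℝ}, w ∈ S → w ∈ Submodule.span ℝ S :=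
    fun h => Submodule.subset_span h
  exact ⟨_, _, _, p₁, p₂, p₃, near_good hu hv h0 hc1 hcg, near_good hu hg hug hc2 hcg,
    near_good hg hk hgk hc3 hcg, ⟨z, hz, rfl, hp, m (by simp [hu_def]), m (by simp [hv_def])⟩,
    hp₁ _ (m (by simp)) (m (by simp)), hp₁ _ (m (by simp)) (m (by simp)),
    hp₂ _ (m (by simp)) (m (by simp)), hp₂ _ (m (by simp)) (m (by simp)),
    hp₃ _ (m (by simp)) (m (by simp)), hp₃ _ hgV hkV⟩

theorem exists_good {b : ℕ} (hb : 3 ≤ b) {Λ : AddSubgroup (Fin b → ℝ)}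
    (hΛ : (Λ : Set (Fin b → ℝ)).Countable) : ∃ V, Good Λ V := by
  let e : Fin 3 → Fin b → ℝ := fun i => Pi.single (Fin.castLE hb i) 1
  have key : ∀ i j, bR (e i) (e j) = if i = j then 1 else 0 := by
    intro i j
    simp only [bR, e]
    rw [Finset.sum_eq_single (Fin.castLE hb i)]
    · by_cases h : i = j
      · subst h; simp [eps]
      · have : Fin.castLE hb i ≠ Fin.castLE hb j := fun h' => h (Fin.castLE_injective hb h')
        simp [h, Pi.single_eq_of_ne this]
    · intro l _ hl
      simp [Pi.single_eq_of_ne hl]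
    · simp
  obtain ⟨c, hc, hcg⟩ := (dense_generic Λ hΛ).inter_open_nonempty _ (near_open (e 0) (e 1))
    ⟨e 2, near_self (by simp [key]) (by simp [key]) (by simp [key])⟩
  exact ⟨_, near_good (by simp [key]) (by simp [key]) (by simp [key]) hc hcg⟩

theorem twistor_period {b : ℕ} {W : Submodule ℝ (Fin b → ℝ)}
    {x : Projectivization ℂ (Fin b → ℂ)} (h : x ∈ twistorLine W) : x ∈ periodDomain b := by
  obtain ⟨z, hz, h1, h2, _⟩ := h
  exact ⟨z, hz, h1, h2⟩

/-- any two points of the period domain are strongly equivalent, i.e.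
connected by a chain of generic twistor lines. -/
theorem stmt9 (b : ℕ) (hb : 3 ≤ b) (Λ : AddSubgroup (Fin b → ℝ))
    (hΛ : (Λ : Set (Fin b → ℝ)).Countable)
    (x y : Projectivization ℂ (Fin b → ℂ))
    (hx : x ∈ periodDomain b) (hy : y ∈ periodDomain b) :
    ∃ k : ℕ, 1 ≤ k ∧ ∃ (W : Fin k → Submodule ℝ (Fin b → ℝ))
      (c : Fin (k + 1) → Projectivization ℂ (Fin b → ℂ)),
      (∀ i, Module.finrank ℝ ↥(W i) = 3 ∧ PosDefOn (W i) ∧ IsGenericW Λ (W i)) ∧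
      (∀ j, c j ∈ periodDomain b) ∧ c 0 = x ∧ c (Fin.last k) = y ∧
      ∀ i : Fin k, c i.castSucc ∈ twistorLine (W i) ∧ c i.succ ∈ twistorLine (W i) := by
  obtain ⟨V, hV⟩ := exists_good hb hΛ
  obtain ⟨W₁, W₂, W₃, p₁, p₂, p₃, g1, g2, g3, a1, a2, a3, a4, a5, a6, a7⟩ :=
    exists_chain hΛ hV hx
  obtain ⟨U₁, U₂, U₃, q₁, q₂, q₃, k1, k2, k3, b1, b2, b3, b4, b5, b6, b7⟩ :=
    exists_chain hΛ hV hy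
  refine ⟨7, by norm_num, ![W₁, W₂, W₃, V, U₃, U₂, U₁], ![x, p₁, p₂, p₃, q₃, q₂, q₁, y],
    ?_, ?_, rfl, rfl, ?_⟩
  · intro i
    fin_cases i
    exacts [g1, g2, g3, hV, k3, k2, k1]
  · intro j
    fin_cases j
    exacts [hx, twistor_period a2, twistor_period a4, twistor_period a6, twistor_period b6,
      twistor_period b4, twistor_period b2, hy]
  · intro i
    fin_cases i
    exacts [⟨a1, a2⟩, ⟨a3, a4⟩, ⟨a5, a6⟩, ⟨a7, b7⟩, ⟨b6, b5⟩, ⟨b4, b3⟩, ⟨b2, b1⟩]
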